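/- If w is a bounded smooth solution of Δw - (1/2) y·∇w - w/(p-1) + |w|^{p-1}w = 0 on ℝ^n with appropriate Gaussian-weighted integrability, then for each coordinate index i, (1/4)∫ y_i |∇w|² ρ dy + (1/(4(p-1)))∫ y_i w² ρ dy - (1/(2(p+1)))∫ y_i |w|^{p+1} ρ dy = 0. -/

import Mathlib

open MeasureTheory Real

noncomputable def lap {n : ℕ} (w : EuclideanSpace ℝ (Fin n) → ℝ)
    (y : EuclideanSpace ℝ (Fin n)) : ℝ :=
  ∑ i, fderiv ℝ (fun z => fderiv ℝ w z (EuclideanSpace.single i 1)) y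
      (EuclideanSpace.single i 1)

noncomputable def rho (n : ℕ) (y : EuclideanSpace ℝ (Fin n)) : ℝ :=
  (4 * Real.pi) ^ (-(n : ℝ) / 2) * Real.exp (-‖y‖ ^ 2 / 4)

/-!
Translation invariance of `Δw + F'(w) = 0` yields, for each direction `v`, the Noether current
`T_v = (∂_v w) ∇w - (½|∇w|² - F(w)) v`, with `div T_v = ∂_v w (Δw + F'(w))`. In the weighted
equation `div (ρ ∇w) + ρ F'(w) = 0` only the weight breaks the invariance, so multiplying by
`∂_v w` gives `div (ρ T_v) = -(∂_v ρ) (½|∇w|² - F(w))`. A `C¹` field that is integrable together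
with its divergence has zero total divergence, as one sees by cutting off at radius `k → ∞`: the
error term is at most `C/k` times the `L¹` norm of the field. Hence `∫ (∂_v ρ) (½|∇w|² - F(w)) = 0`,
and for the Gaussian `∂_i ρ = -(y_i/2) ρ`. The integrability of `ρ T_v` follows from that of the
coordinate-weighted densities, because `∑ |y_i| ≥ |y| ≥ 1` outside the unit ball.
-/

open Filter InnerProductSpace Module Topology
open scoped Gradient

section Divergence

variable {E : Type*} [NormedAddCommGroup E] [NormedSpace ℝ E]

/-- The divergence of a vector field, encoded as the trace of its derivative; it takes the junk
value `0` where the field is not differentiable. -/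
noncomputable def divergence (X : E → E) (y : E) : ℝ :=
  LinearMap.trace ℝ E (fderiv ℝ X y)

lemma divergence_sub {X Y : E → E} {y : E} (hX : DifferentiableAt ℝ X y)
    (hY : DifferentiableAt ℝ Y y) :
    divergence (fun z => X z - Y z) y = divergence X y - divergence Y y := by
  simp [divergence, fderiv_fun_sub hX hY]

lemma divergence_eq_sum_coord {ι : Type*} [Fintype ι] (b : Basis ι ℝ E) (X : E → E) (y : E) :
    divergence X y = ∑ i, b.coord i (fderiv ℝ X y (b i)) := by
  classical
  simp [divergence, LinearMap.trace_eq_matrix_trace ℝ b, Matrix.trace, LinearMap.toMatrix_apply]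

variable [FiniteDimensional ℝ E]

lemma divergence_smul {g : E → ℝ} {X : E → E} {y : E} (hg : DifferentiableAt ℝ g y)
    (hX : DifferentiableAt ℝ X y) :
    divergence (fun z => g z • X z) y = g y * divergence X y + fderiv ℝ g y (X y) := by
  simp [divergence, fderiv_fun_smul hg hX, LinearMap.trace_smulRight]

lemma divergence_smul_const {g : E → ℝ} {y : E} (hg : DifferentiableAt ℝ g y) (v : E) :
    divergence (fun z => g z • v) y = fderiv ℝ g y v := by
  simp [divergence, fderiv_smul_const hg, LinearMap.trace_smulRight]

variable (E) in
lemma exists_contDiff_cutoff_sequence :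
    ∃ (χ : ℕ → E → ℝ) (C : ℝ),
      (∀ k, ContDiff ℝ 1 (χ k)) ∧ (∀ k, HasCompactSupport (χ k)) ∧
      (∀ k y, |χ k y| ≤ 1) ∧ (∀ k y, ‖fderiv ℝ (χ k) y‖ ≤ C / (k + 1)) ∧
      ∀ y, Tendsto (χ · y) atTop (𝓝 1) := by
  let f : ContDiffBump (0 : E) := default
  have hf : ContDiff ℝ 1 f := f.contDiff
  obtain ⟨C, hC⟩ := (hf.continuous_fderiv one_ne_zero).bounded_above_of_compact_support
    (f.hasCompactSupport.fderiv (𝕜 := ℝ))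
  have hscale (k : ℕ) : ((k : ℝ) + 1)⁻¹ ≠ 0 := by positivity
  refine ⟨fun k y => f (((k : ℝ) + 1)⁻¹ • y), C, fun k => hf.comp (contDiff_const_smul _),
    fun k => f.hasCompactSupport.comp_smul (hscale k),
    fun k y => abs_le.2 ⟨by linarith [f.nonneg' (((k : ℝ) + 1)⁻¹ • y)], f.le_one⟩,
    fun k y => ?_, fun y => ?_⟩
  · have hchain : fderiv ℝ (fun z => f (((k : ℝ) + 1)⁻¹ • z)) y = _ := fderiv_comp_smul _
    rw [hchain, norm_smul, norm_inv, Real.norm_of_nonneg (by positivity),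
      div_eq_inv_mul]
    gcongr
    exact hC _
  · have hzero : Tendsto (fun k : ℕ => ((k : ℝ) + 1)⁻¹ • y) atTop (𝓝 0) := by
      simpa using (tendsto_one_div_add_atTop_nhds_zero_nat (𝕜 := ℝ)).smul_const y
    exact (f.continuous.tendsto' 0 1 f.eventuallyEq_one.self_of_nhds).comp hzero

variable [MeasurableSpace E] [BorelSpace E] (μ : Measure E) [μ.IsAddHaarMeasure]

lemma integral_fderiv_apply_eq_zero_of_hasCompactSupport {F : Type*} [NormedAddCommGroup F]
    [NormedSpace ℝ F] {g : E → F} (hg : ContDiff ℝ 1 g) (hsupp : HasCompactSupport g) (v : E) :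
    ∫ y, fderiv ℝ g y v ∂μ = 0 := by
  have hderiv : Integrable (fun y => fderiv ℝ g y v) μ :=
    ((hg.continuous_fderiv one_ne_zero).clm_apply continuous_const).integrable_of_hasCompactSupport
      (hsupp.fderiv_apply (𝕜 := ℝ) v)
  simpa using integral_smul_fderiv_eq_neg_fderiv_smul_of_integrable (μ := μ) (v := v)
    (f := fun _ : E => (1 : ℝ)) (g := g) (by simp) (by simpa using hderiv)
    (by simpa using hg.continuous.integrable_of_hasCompactSupport hsupp)
    (fun _ _ => differentiableAt_const _) (fun y _ => hg.differentiable one_ne_zero y)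

lemma integral_divergence_eq_zero_of_hasCompactSupport {X : E → E} (hX : ContDiff ℝ 1 X)
    (hsupp : HasCompactSupport X) : ∫ y, divergence X y ∂μ = 0 := by
  let b := finBasis ℝ E
  have hderiv (v : E) : Integrable (fun y => fderiv ℝ X y v) μ :=
    ((hX.continuous_fderiv one_ne_zero).clm_apply continuous_const).integrable_of_hasCompactSupport
      (hsupp.fderiv_apply (𝕜 := ℝ) v)
  let coord (i) : E →L[ℝ] ℝ := (b.coord i).toContinuousLinearMap
  calc ∫ y, divergence X y ∂μ
    _ = ∫ y, ∑ i, coord i (fderiv ℝ X y (b i)) ∂μ := by simp [divergence_eq_sum_coord b, coord]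
    _ = ∑ i, coord i (∫ y, fderiv ℝ X y (b i) ∂μ) := by
      rw [integral_finsetSum _ fun i _ => (coord i).integrable_comp (hderiv (b i))]
      exact Finset.sum_congr rfl fun i _ => (coord i).integral_comp_comm (hderiv (b i))
    _ = 0 := by simp [integral_fderiv_apply_eq_zero_of_hasCompactSupport μ hX hsupp]

theorem integral_divergence_eq_zero {X : E → E} (hX : ContDiff ℝ 1 X) (hXint : Integrable X μ)
    (hdiv : Integrable (divergence X) μ) : ∫ y, divergence X y ∂μ = 0 := by
  obtain ⟨χ, C, hχ, hsupp, hχ1, hχ', hlim⟩ := exists_contDiff_cutoff_sequence E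
  have hproduct (k : ℕ) (y : E) : divergence (fun z => χ k z • X z) y
      = χ k y * divergence X y + fderiv ℝ (χ k) y (X y) :=
    divergence_smul ((hχ k).differentiable one_ne_zero y) (hX.differentiable one_ne_zero y)
  have hcut (k : ℕ) : ∫ y, (χ k y * divergence X y + fderiv ℝ (χ k) y (X y)) ∂μ = 0 := by
    simp_rw [← hproduct]
    exact integral_divergence_eq_zero_of_hasCompactSupport μ ((hχ k).smul hX) (hsupp k).smul_right
  have hgrad (k : ℕ) (y : E) : ‖fderiv ℝ (χ k) y (X y)‖ ≤ C / (k + 1) * ‖X y‖ :=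
    (fderiv ℝ (χ k) y).le_of_opNorm_le (hχ' k y) _
  have hC : 0 ≤ C := by simpa using (norm_nonneg _).trans (hχ' 0 0)
  have htendsto : Tendsto (fun k => ∫ y, (χ k y * divergence X y + fderiv ℝ (χ k) y (X y)) ∂μ)
      atTop (𝓝 (∫ y, divergence X y ∂μ)) := by
    refine tendsto_integral_of_dominated_convergence
      (fun y => ‖divergence X y‖ + C * ‖X y‖) (fun k => ?_) (hdiv.norm.add (hXint.norm.const_mul C))
      (fun k => .of_forall fun y => ?_) (.of_forall fun y => ?_)
    · exact ((hχ k).continuous.aestronglyMeasurable.mul hdiv.aestronglyMeasurable).add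
        (((hχ k).continuous_fderiv one_ne_zero).clm_apply hX.continuous).aestronglyMeasurable
    · refine (norm_add_le _ _).trans (add_le_add ?_ ((hgrad k y).trans ?_))
      · rw [norm_mul]
        exact mul_le_of_le_one_left (norm_nonneg _) (hχ1 k y)
      · gcongr
        exact div_le_self hC (by simp)
    · have hgrad_zero : Tendsto (fun k : ℕ => fderiv ℝ (χ k) y (X y)) atTop (𝓝 0) := by
        refine squeeze_zero_norm (hgrad · y) ?_
        simpa [div_eq_mul_inv] using
          ((tendsto_one_div_add_atTop_nhds_zero_nat (𝕜 := ℝ)).const_mul C).mul_const ‖X y‖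
      simpa using ((hlim y).mul_const (divergence X y)).add hgrad_zero
  exact tendsto_nhds_unique htendsto (by simp [hcut])

end Divergence

section EnergyMomentum

variable {E : Type*} [NormedAddCommGroup E] [InnerProductSpace ℝ E] [FiniteDimensional ℝ E]

lemma contDiff_gradient {w : E → ℝ} {m n : WithTop ℕ∞} (hw : ContDiff ℝ n w) (hmn : m + 1 ≤ n) :
    ContDiff ℝ m (∇ w) :=
  (toDual ℝ E).symm.contDiff.comp (hw.fderiv_right hmn)

lemma norm_gradient (w : E → ℝ) (y : E) : ‖∇ w y‖ = ‖fderiv ℝ w y‖ :=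
  (toDual ℝ E).symm.norm_map _

lemma fderiv_fderiv_apply_eq_inner {w : E → ℝ} {y : E} (hw : DifferentiableAt ℝ (∇ w) y) (u v : E) :
    fderiv ℝ (fun z => fderiv ℝ w z v) y u = inner ℝ (fderiv ℝ (∇ w) y u) v := by
  have hinner : (fun z => fderiv ℝ w z v) = fun z => inner ℝ (∇ w z) v :=
    funext fun _ => inner_gradient_left.symm
  rw [hinner, fderiv_inner_apply ℝ hw (differentiableAt_const v)]
  simp

lemma inner_fderiv_gradient_comm {w : E → ℝ} (hw : ContDiff ℝ 2 w) (y u v : E) :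
    inner ℝ (fderiv ℝ (∇ w) y u) v = inner ℝ (fderiv ℝ (∇ w) y v) u := by
  have hgrad : DifferentiableAt ℝ (∇ w) y :=
    (contDiff_gradient hw le_rfl).differentiable one_ne_zero y
  have hderiv : DifferentiableAt ℝ (fderiv ℝ w) y :=
    (hw.fderiv_right (m := 1) le_rfl).differentiable one_ne_zero y
  have hhess (a b : E) : fderiv ℝ (fderiv ℝ w) y a b = inner ℝ (fderiv ℝ (∇ w) y a) b := by
    rw [← fderiv_fderiv_apply_eq_inner hgrad,
      fderiv_clm_apply hderiv (differentiableAt_const b)]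
    simp
  rw [← hhess, ← hhess]
  exact hw.contDiffAt.isSymmSndFDerivAt (by simp) u v

lemma divergence_gradient_eq_sum {ι : Type*} [Fintype ι] (b : OrthonormalBasis ι ℝ E) {w : E → ℝ}
    {y : E} (hw : DifferentiableAt ℝ (∇ w) y) :
    divergence (∇ w) y = ∑ i, fderiv ℝ (fun z => fderiv ℝ w z (b i)) y (b i) := by
  simp_rw [divergence, LinearMap.trace_eq_sum_inner _ b, fderiv_fderiv_apply_eq_inner hw]
  exact Finset.sum_congr rfl fun i _ => real_inner_comm _ _

/-- The Lagrangian density `½|∇w|² - F(w)`, whose Euler–Lagrange equation is `Δw + F'(w) = 0`. -/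
noncomputable def lagrangian (F : ℝ → ℝ) (w : E → ℝ) (y : E) : ℝ :=
  1 / 2 * ‖∇ w y‖ ^ 2 - F (w y)

/-- The energy–momentum tensor of `lagrangian F`, contracted with the constant field `v`: the
Noether current attached to translations in the direction `v`. -/
noncomputable def energyMomentum (F : ℝ → ℝ) (w : E → ℝ) (v y : E) : E :=
  fderiv ℝ w y v • ∇ w y - lagrangian F w y • v

variable {F : ℝ → ℝ} {w ρ : E → ℝ}

lemma contDiff_lagrangian (hF : ContDiff ℝ 1 F) (hw : ContDiff ℝ 2 w) :
    ContDiff ℝ 1 (lagrangian F w) :=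
  (contDiff_const.mul ((contDiff_gradient hw le_rfl).norm_sq ℝ)).sub
    (hF.comp (hw.of_le one_le_two))

lemma contDiff_energyMomentum (hF : ContDiff ℝ 1 F) (hw : ContDiff ℝ 2 w) (v : E) :
    ContDiff ℝ 1 (energyMomentum F w v) :=
  (((hw.fderiv_right le_rfl).clm_apply contDiff_const).smul (contDiff_gradient hw le_rfl)).sub
    ((contDiff_lagrangian hF hw).smul contDiff_const)

lemma fderiv_lagrangian_apply (hF : ContDiff ℝ 1 F) (hw : ContDiff ℝ 2 w) (y v : E) :
    fderiv ℝ (lagrangian F w) y v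
      = inner ℝ (∇ w y) (fderiv ℝ (∇ w) y v) - deriv F (w y) * fderiv ℝ w y v := by
  have hgrad : HasFDerivAt (∇ w) (fderiv ℝ (∇ w) y) y :=
    ((contDiff_gradient hw le_rfl).differentiable one_ne_zero y).hasFDerivAt
  have hpot : HasFDerivAt (fun z => F (w z)) (deriv F (w y) • fderiv ℝ w y) y :=
    (hF.differentiable one_ne_zero _).hasDerivAt.comp_hasFDerivAt y
      (hw.differentiable two_ne_zero y).hasFDerivAt
  have h : HasFDerivAt (lagrangian F w) _ y := (hgrad.norm_sq.const_mul (1 / 2)).sub hpot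
  simp [h.fderiv]

lemma divergence_energyMomentum (hF : ContDiff ℝ 1 F) (hw : ContDiff ℝ 2 w) (v y : E) :
    divergence (energyMomentum F w v) y
      = fderiv ℝ w y v * (divergence (∇ w) y + deriv F (w y)) := by
  have hgrad : DifferentiableAt ℝ (∇ w) y :=
    (contDiff_gradient hw le_rfl).differentiable one_ne_zero y
  have hlag : DifferentiableAt ℝ (lagrangian F w) y :=
    (contDiff_lagrangian hF hw).differentiable one_ne_zero y
  have hdir : DifferentiableAt ℝ (fun z => fderiv ℝ w z v) y :=
    ((hw.fderiv_right le_rfl).clm_apply contDiff_const).differentiable one_ne_zero y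
  have hhess : fderiv ℝ (fun z => fderiv ℝ w z v) y (∇ w y)
      = inner ℝ (∇ w y) (fderiv ℝ (∇ w) y v) := by
    rw [fderiv_fderiv_apply_eq_inner hgrad, inner_fderiv_gradient_comm hw, real_inner_comm]
  calc divergence (energyMomentum F w v) y
    _ = divergence (fun z => fderiv ℝ w z v • ∇ w z) y
        - divergence (fun z => lagrangian F w z • v) y :=
      divergence_sub (hdir.smul hgrad) (hlag.smul_const v)
    _ = fderiv ℝ w y v * (divergence (∇ w) y + deriv F (w y)) := by
      rw [divergence_smul hdir hgrad, divergence_smul_const hlag, fderiv_lagrangian_apply hF hw,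
        hhess]
      ring

lemma divergence_weight_smul_energyMomentum (hF : ContDiff ℝ 1 F) (hw : ContDiff ℝ 2 w) {y : E}
    (hρ : DifferentiableAt ℝ ρ y)
    (heq : divergence (fun z => ρ z • ∇ w z) y + ρ y * deriv F (w y) = 0) (v : E) :
    divergence (fun z => ρ z • energyMomentum F w v z) y
      = -(fderiv ℝ ρ y v * lagrangian F w y) := by
  rw [divergence_smul hρ ((contDiff_gradient hw le_rfl).differentiable one_ne_zero y)] at heq
  rw [divergence_smul hρ ((contDiff_energyMomentum hF hw v).differentiable one_ne_zero y),
    divergence_energyMomentum hF hw]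
  simp only [energyMomentum, map_sub, map_smul, smul_eq_mul]
  linear_combination fderiv ℝ w y v * heq

lemma norm_energyMomentum_le (F : ℝ → ℝ) (w : E → ℝ) (v y : E) :
    ‖energyMomentum F w v y‖ ≤ (3 / 2 * ‖∇ w y‖ ^ 2 + ‖F (w y)‖) * ‖v‖ := by
  have hdir : ‖fderiv ℝ w y v‖ ≤ ‖∇ w y‖ * ‖v‖ := by
    simpa [norm_gradient] using (fderiv ℝ w y).le_opNorm v
  have hlag : ‖lagrangian F w y‖ ≤ 1 / 2 * ‖∇ w y‖ ^ 2 + ‖F (w y)‖ :=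
    (norm_sub_le _ _).trans_eq (by simp)
  calc ‖energyMomentum F w v y‖
    _ ≤ ‖fderiv ℝ w y v‖ * ‖∇ w y‖ + ‖lagrangian F w y‖ * ‖v‖ := by
      simpa [energyMomentum, norm_smul] using
        norm_sub_le (fderiv ℝ w y v • ∇ w y) (lagrangian F w y • v)
    _ ≤ ‖∇ w y‖ * ‖v‖ * ‖∇ w y‖ + (1 / 2 * ‖∇ w y‖ ^ 2 + ‖F (w y)‖) * ‖v‖ := by gcongr
    _ = (3 / 2 * ‖∇ w y‖ ^ 2 + ‖F (w y)‖) * ‖v‖ := by ring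

variable [MeasurableSpace E] [BorelSpace E] {μ : Measure E}

lemma integrable_weight_smul_energyMomentum (hF : ContDiff ℝ 1 F) (hw : ContDiff ℝ 2 w)
    (hρ : AEStronglyMeasurable ρ μ) (hgrad : Integrable (fun y => ‖∇ w y‖ ^ 2 * ρ y) μ)
    (hpot : Integrable (fun y => F (w y) * ρ y) μ) (v : E) :
    Integrable (fun y => ρ y • energyMomentum F w v y) μ := by
  refine (((hgrad.norm.const_mul (3 / 2)).add hpot.norm).mul_const ‖v‖).mono'
    (hρ.smul (contDiff_energyMomentum hF hw v).continuous.aestronglyMeasurable)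
    (.of_forall fun y => ?_)
  calc ‖ρ y • energyMomentum F w v y‖
    _ ≤ ‖ρ y‖ * ((3 / 2 * ‖∇ w y‖ ^ 2 + ‖F (w y)‖) * ‖v‖) := by
      rw [norm_smul]
      gcongr
      exact norm_energyMomentum_le F w v y
    _ = (3 / 2 * ‖‖∇ w y‖ ^ 2 * ρ y‖ + ‖F (w y) * ρ y‖) * ‖v‖ := by
      simp only [norm_mul, norm_pow, norm_norm]
      ring

theorem integral_fderiv_weight_mul_lagrangian_eq_zero [μ.IsAddHaarMeasure] (hF : ContDiff ℝ 1 F)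
    (hw : ContDiff ℝ 2 w) (hρ : ContDiff ℝ 1 ρ)
    (heq : ∀ y, divergence (fun z => ρ z • ∇ w z) y + ρ y * deriv F (w y) = 0)
    (hgrad : Integrable (fun y => ‖∇ w y‖ ^ 2 * ρ y) μ)
    (hpot : Integrable (fun y => F (w y) * ρ y) μ) {v : E}
    (hlag : Integrable (fun y => fderiv ℝ ρ y v * lagrangian F w y) μ) :
    ∫ y, fderiv ℝ ρ y v * lagrangian F w y ∂μ = 0 := by
  have hdiv : divergence (fun z => ρ z • energyMomentum F w v z)
      = fun y => -(fderiv ℝ ρ y v * lagrangian F w y) :=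
    funext fun y => divergence_weight_smul_energyMomentum hF hw
      (hρ.differentiable one_ne_zero y) (heq y) v
  have hflux : ∫ y, divergence (fun z => ρ z • energyMomentum F w v z) y ∂μ = 0 :=
    integral_divergence_eq_zero μ (hρ.smul (contDiff_energyMomentum hF hw v))
      (integrable_weight_smul_energyMomentum hF hw hρ.continuous.aestronglyMeasurable hgrad hpot v)
      (hdiv ▸ hlag.neg)
  simpa [hdiv, integral_neg] using hflux

end EnergyMomentum

section Gaussian

lemma norm_le_sum_norm_coord {ι : Type*} [Fintype ι] (y : EuclideanSpace ℝ ι) :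
    ‖y‖ ≤ ∑ i, ‖y i‖ := by
  classical
  conv_lhs => rw [← (EuclideanSpace.basisFun ι ℝ).sum_repr y]
  exact (norm_sum_le _ _).trans_eq (by simp [norm_smul])

lemma integrable_of_forall_integrable_coord_smul {ι : Type*} [Finite ι] {F : Type*}
    [NormedAddCommGroup F] [NormedSpace ℝ F] {μ : Measure (EuclideanSpace ℝ ι)}
    {f : EuclideanSpace ℝ ι → F} (hf : LocallyIntegrable f μ)
    (hcoord : ∀ i, Integrable (fun y => y i • f y) μ) : Integrable f μ := by
  cases nonempty_fintype ι
  have hsum : Integrable (fun y => ∑ i, ‖y i • f y‖) μ :=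
    integrable_finsetSum _ fun i _ => (hcoord i).norm
  refine hf.integrable_of_isBigO_cocompact (.of_bound 1 ?_) (hsum.integrableAtFilter _)
  filter_upwards [tendsto_norm_cocompact_atTop.eventually_ge_atTop 1] with y hy
  calc ‖f y‖
    _ ≤ ‖y‖ * ‖f y‖ := le_mul_of_one_le_left (norm_nonneg _) hy
    _ ≤ (∑ i, ‖y i‖) * ‖f y‖ := by gcongr; exact norm_le_sum_norm_coord y
    _ = ∑ i, ‖y i • f y‖ := by simp only [norm_smul, Finset.sum_mul]
    _ ≤ 1 * ‖∑ i, ‖y i • f y‖‖ := by rw [one_mul]; exact le_norm_self _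

variable {n : ℕ}

lemma contDiff_rho (n : ℕ) {m : WithTop ℕ∞} : ContDiff ℝ m (rho n) :=
  contDiff_const.mul (((contDiff_norm_sq ℝ).neg.div_const 4).exp)

lemma fderiv_rho_apply (y v : EuclideanSpace ℝ (Fin n)) :
    fderiv ℝ (rho n) y v = -(1 / 2) * inner ℝ y v * rho n y := by
  have hexponent : HasFDerivAt (fun z : EuclideanSpace ℝ (Fin n) => -‖z‖ ^ 2 / 4) _ y :=
    (hasStrictFDerivAt_norm_sq y).hasFDerivAt.neg.mul_const (4 : ℝ)⁻¹
  have h : HasFDerivAt (rho n) _ y := hexponent.exp.const_mul _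
  rw [h.fderiv]
  simp only [rho, neg_apply, smul_apply, coe_innerSL_apply, nsmul_eq_mul, Nat.cast_ofNat,
    smul_neg, smul_eq_mul]
  ring

lemma divergence_gradient_eq_lap {w : EuclideanSpace ℝ (Fin n) → ℝ}
    {y : EuclideanSpace ℝ (Fin n)} (hw : DifferentiableAt ℝ (∇ w) y) :
    divergence (∇ w) y = lap w y := by
  simpa [lap] using divergence_gradient_eq_sum (EuclideanSpace.basisFun (Fin n) ℝ) hw

lemma divergence_rho_smul_gradient {w : EuclideanSpace ℝ (Fin n) → ℝ}
    {y : EuclideanSpace ℝ (Fin n)} (hw : DifferentiableAt ℝ (∇ w) y) :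
    divergence (fun z => rho n z • ∇ w z) y = rho n y * (lap w y - 1 / 2 * fderiv ℝ w y y) := by
  rw [divergence_smul ((contDiff_rho n).differentiable one_ne_zero y) hw, fderiv_rho_apply,
    divergence_gradient_eq_lap hw, inner_gradient_right, conj_trivial]
  ring

end Gaussian

section PowerPotential

/-- The primitive of the nonlinearity `|t|^(p-1) t - t/(p-1)` of the self-similar heat equation. -/
noncomputable def powerPotential (p t : ℝ) : ℝ :=
  |t| ^ (p + 1) / (p + 1) - t ^ 2 / (2 * (p - 1))

variable {p : ℝ}

lemma contDiff_powerPotential (hp : 0 < p) : ContDiff ℝ 1 (powerPotential p) :=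
  ((contDiff_norm_rpow (by linarith)).div_const _).sub ((contDiff_id.pow 2).div_const _)

lemma deriv_powerPotential (hp : 0 < p) (hp1 : p ≠ 1) (t : ℝ) :
    deriv (powerPotential p) t = |t| ^ (p - 1) * t - t / (p - 1) := by
  have hsub : p - 1 ≠ 0 := sub_ne_zero.2 hp1
  have h : HasDerivAt (powerPotential p) _ t :=
    ((hasDerivAt_abs_rpow t (p := p + 1) (by linarith)).div_const (p + 1)).sub
      ((hasDerivAt_pow 2 t).div_const (2 * (p - 1)))
  rw [h.deriv, show p + 1 - 2 = p - 1 by ring]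
  simp only [Nat.cast_ofNat, Nat.add_one_sub_one, pow_one]
  field_simp

variable {n : ℕ} {w : EuclideanSpace ℝ (Fin n) → ℝ}

lemma integrable_powerPotential_mul_rho (hp : 0 < p) (hw : Continuous w)
    (hsq : ∀ i : Fin n, Integrable (fun y => y i * w y ^ 2 * rho n y))
    (hpow : ∀ i : Fin n, Integrable (fun y => y i * |w y| ^ (p + 1) * rho n y)) :
    Integrable (fun y => powerPotential p (w y) * rho n y) := by
  have hcont : Continuous (fun y => powerPotential p (w y) * rho n y) :=
    ((contDiff_powerPotential hp).continuous.comp hw).mul (contDiff_rho n (m := 0)).continuous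
  refine integrable_of_forall_integrable_coord_smul hcont.locallyIntegrable fun i => ?_
  refine (((hpow i).div_const (p + 1)).sub ((hsq i).div_const (2 * (p - 1)))).congr
    (.of_forall fun y => ?_)
  simp only [Pi.sub_apply, powerPotential, smul_eq_mul]
  ring

lemma fderiv_rho_single_mul_lagrangian_powerPotential (w : EuclideanSpace ℝ (Fin n) → ℝ)
    (p : ℝ) (i : Fin n) (y : EuclideanSpace ℝ (Fin n)) :
    fderiv ℝ (rho n) y (EuclideanSpace.single i 1) * lagrangian (powerPotential p) w y
      = -(1 / 4 * (y i * ‖fderiv ℝ w y‖ ^ 2 * rho n y)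
          + 1 / (4 * (p - 1)) * (y i * w y ^ 2 * rho n y)
          - 1 / (2 * (p + 1)) * (y i * |w y| ^ (p + 1) * rho n y)) := by
  rw [fderiv_rho_apply, EuclideanSpace.inner_single_right, lagrangian, powerPotential,
    norm_gradient, conj_trivial]
  simp only [mul_inv, div_eq_mul_inv]
  ring

lemma integrable_fderiv_rho_single_mul_lagrangian_powerPotential {i : Fin n}
    (hgrad : Integrable (fun y => y i * ‖fderiv ℝ w y‖ ^ 2 * rho n y))
    (hsq : Integrable (fun y => y i * w y ^ 2 * rho n y))
    (hpow : Integrable (fun y => y i * |w y| ^ (p + 1) * rho n y)) :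
    Integrable (fun y => fderiv ℝ (rho n) y (EuclideanSpace.single i 1)
      * lagrangian (powerPotential p) w y) := by
  simp_rw [fderiv_rho_single_mul_lagrangian_powerPotential]
  exact (((hgrad.const_mul _).add (hsq.const_mul _)).sub (hpow.const_mul _)).neg

lemma integral_fderiv_rho_single_mul_lagrangian_powerPotential {i : Fin n}
    (hgrad : Integrable (fun y => y i * ‖fderiv ℝ w y‖ ^ 2 * rho n y))
    (hsq : Integrable (fun y => y i * w y ^ 2 * rho n y))
    (hpow : Integrable (fun y => y i * |w y| ^ (p + 1) * rho n y)) :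
    ∫ y, fderiv ℝ (rho n) y (EuclideanSpace.single i 1) * lagrangian (powerPotential p) w y
      = -(1 / 4 * (∫ y, y i * ‖fderiv ℝ w y‖ ^ 2 * rho n y)
          + 1 / (4 * (p - 1)) * (∫ y, y i * w y ^ 2 * rho n y)
          - 1 / (2 * (p + 1)) * (∫ y, y i * |w y| ^ (p + 1) * rho n y)) := by
  simp_rw [fderiv_rho_single_mul_lagrangian_powerPotential]
  rw [integral_neg, integral_sub ?_ (hpow.const_mul _),
    integral_add (hgrad.const_mul _) (hsq.const_mul _)]
  · simp only [integral_const_mul]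
  · exact (hgrad.const_mul _).add (hsq.const_mul _)

end PowerPotential

theorem coordinate_weighted_identity_general
    (n : ℕ) (p : ℝ) (hp : 0 < p) (hp1 : p ≠ 1) (w : EuclideanSpace ℝ (Fin n) → ℝ)
    (hw : ContDiff ℝ 2 w)
    (heq : ∀ y, lap w y - (1 / 2) * fderiv ℝ w y y - w y / (p - 1)
        + |w y| ^ (p - 1) * w y = 0)
    (hint1 : ∀ i : Fin n, Integrable (fun y => y i * ‖fderiv ℝ w y‖ ^ 2 * rho n y))
    (hint2 : ∀ i : Fin n, Integrable (fun y => y i * (w y) ^ 2 * rho n y))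
    (hint3 : ∀ i : Fin n, Integrable (fun y => y i * |w y| ^ (p + 1) * rho n y)) (i : Fin n) :
    (1 / 4) * (∫ y, y i * ‖fderiv ℝ w y‖ ^ 2 * rho n y)
      + (1 / (4 * (p - 1))) * (∫ y, y i * (w y) ^ 2 * rho n y)
      - (1 / (2 * (p + 1))) * (∫ y, y i * |w y| ^ (p + 1) * rho n y) = 0 := by
  have hgradw : ContDiff ℝ 1 (∇ w) := contDiff_gradient hw le_rfl
  have hdiv (y) : divergence (fun z => rho n z • ∇ w z) y
      + rho n y * deriv (powerPotential p) (w y) = 0 := by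
    rw [divergence_rho_smul_gradient (hgradw.differentiable one_ne_zero y),
      deriv_powerPotential hp hp1]
    linear_combination rho n y * heq y
  have hgrad : Integrable (fun y => ‖∇ w y‖ ^ 2 * rho n y) :=
    integrable_of_forall_integrable_coord_smul
      ((hgradw.continuous.norm.pow 2).mul (contDiff_rho n (m := 0)).continuous).locallyIntegrable
      (by simpa only [norm_gradient, smul_eq_mul, mul_assoc] using hint1)
  have hzero := integral_fderiv_weight_mul_lagrangian_eq_zero (contDiff_powerPotential hp) hw
    (contDiff_rho n) hdiv hgrad (integrable_powerPotential_mul_rho hp hw.continuous hint2 hint3)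
    (integrable_fderiv_rho_single_mul_lagrangian_powerPotential (hint1 i) (hint2 i) (hint3 i))
  rwa [integral_fderiv_rho_single_mul_lagrangian_powerPotential (hint1 i) (hint2 i) (hint3 i),
    neg_eq_zero] at hzero

/-- Coordinate-weighted identity: for each `i`,
`(1/4)∫ yᵢ |∇w|² ρ + (1/(4(p-1)))∫ yᵢ w² ρ - (1/(2(p+1)))∫ yᵢ |w|^{p+1} ρ = 0`. -/
theorem coordinate_weighted_identity
    (n : ℕ) (p : ℝ) (hp : 1 < p) (w : EuclideanSpace ℝ (Fin n) → ℝ)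
    (hsmooth : ContDiff ℝ (⊤ : ℕ∞) w)
    (hbd : ∃ M : ℝ, ∀ y, |w y| ≤ M ∧ ‖fderiv ℝ w y‖ ≤ M ∧
        ‖fderiv ℝ (fderiv ℝ w) y‖ ≤ M)
    (heq : ∀ y, lap w y - (1 / 2) * fderiv ℝ w y y - w y / (p - 1)
        + |w y| ^ (p - 1) * w y = 0)
    (hint1 : ∀ i : Fin n, Integrable (fun y => y i * ‖fderiv ℝ w y‖ ^ 2 * rho n y))
    (hint2 : ∀ i : Fin n, Integrable (fun y => y i * (w y) ^ 2 * rho n y))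
    (hint3 : ∀ i : Fin n, Integrable (fun y => y i * |w y| ^ (p + 1) * rho n y)) :
    ∀ i : Fin n,
      (1 / 4) * (∫ y, y i * ‖fderiv ℝ w y‖ ^ 2 * rho n y)
        + (1 / (4 * (p - 1))) * (∫ y, y i * (w y) ^ 2 * rho n y)
        - (1 / (2 * (p + 1))) * (∫ y, y i * |w y| ^ (p + 1) * rho n y) = 0 := by
  exact coordinate_weighted_identity_general n p (by linarith) hp.ne' w
    (hsmooth.of_le (WithTop.coe_le_coe.2 le_top)) heq hint1 hint2 hint3
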